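/- arXiv:2412.13616 — 2 statements merged into one kernel-verified Lean document; each statement's English description precedes it below -/
import Mathlib

section
/- Let 𝔽_q be a finite field, l, m positive integers, and suppose (x^l − 1)(y^m − 1) = g(x,y)·h(x,y) in 𝔽_q[x,y] with g, h nonzero. Let C be the ideal of 𝔎 = 𝔽_q[x,y]/⟨x^l−1, y^m−1⟩ generated by the image of g, and let C* be the ideal of 𝔎 generated by the image of the reciprocal polynomial h*. Then C* ⊆ C^⊥, where C^⊥ is the Euclidean dual of C under the identification of 𝔎 with 𝔽_q^{lm} via coefficients of the unique representative with x-degree < l and y-degree < m. -/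
open MvPolynomial

/-- The reciprocal polynomial of a bivariate polynomial `f` of `x`-degree `l₁` and
`y`-degree `l₂`: if `f = Σ f_{i,j} x^i y^j` then `f* = Σ f_{i,j} x^{l₁-i} y^{l₂-j}`. -/
noncomputable def recip {F : Type*} [Field F] (f : MvPolynomial (Fin 2) F) :
    MvPolynomial (Fin 2) F :=
  ∑ d ∈ f.support,
    MvPolynomial.monomial
      (Finsupp.single (0 : Fin 2) (f.degreeOf 0 - d 0) +
        Finsupp.single (1 : Fin 2) (f.degreeOf 1 - d 1))
      (MvPolynomial.coeff d f)

/-!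
Let `u` be the family of standard generators of `G = ℤ/l × ℤ/m`. Evaluating the variables at `u` or
at `-u` in the group algebra `F[G]` gives two homomorphisms `φ, ψ : F[x, y] → F[G]`, both of which
kill `⟨x ^ l - 1, y ^ m - 1⟩`. For reduced `p` and `q`, the Euclidean inner product of the
coefficient vectors is the coefficient of the identity in `φ p * ψ q`. Moreover `ψ (h*)` is a group
element times `φ h`. So if `p` represents an element of `C` and `q` an element of `C*`, then
`φ p * ψ q` is a multiple of `φ (g * h) = 0`.
-/

section GroupAlgebra

variable {σ R G : Type*}

/-- Evaluation of polynomials in the (additively written) group algebra `R[G]`, the variable `X i`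
being sent to the group element `u i`. It is induced by the map on exponents `d ↦ ∑ i, d i • u i`,
that is, by `Finsupp.weight u`. -/
noncomputable def groupAlgebraEval [CommSemiring R] [AddCommMonoid G] (u : σ → G) :
    MvPolynomial σ R →ₐ[R] AddMonoidAlgebra R G :=
  AddMonoidAlgebra.mapDomainAlgHom R R (Finsupp.weight u)

lemma groupAlgebraEval_monomial [CommSemiring R] [AddCommMonoid G] (u : σ → G) (d : σ →₀ ℕ)
    (r : R) :
    groupAlgebraEval u (monomial d r) = AddMonoidAlgebra.single (Finsupp.weight u d) r :=
  AddMonoidAlgebra.mapDomain_single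

lemma groupAlgebraEval_eq_sum [CommSemiring R] [AddCommMonoid G] (u : σ → G)
    (p : MvPolynomial σ R) :
    groupAlgebraEval u p =
      ∑ d ∈ p.support, AddMonoidAlgebra.single (Finsupp.weight u d) (coeff d p) := by
  conv_lhs => rw [p.as_sum, map_sum]
  simp only [groupAlgebraEval_monomial]

lemma groupAlgebraEval_X_pow_sub_one_eq_zero [CommRing R] [AddCommMonoid G] {u : σ → G} {i : σ}
    {n : ℕ} (hu : n • u i = 0) : groupAlgebraEval u (X i ^ n - 1 : MvPolynomial σ R) = 0 := by
  rw [map_sub, map_one, X_pow_eq_monomial, groupAlgebraEval_monomial, Finsupp.weight_single, hu,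
    ← AddMonoidAlgebra.one_def, sub_self]

lemma span_X_pow_sub_one_le_ker_groupAlgebraEval [CommRing R] [AddCommMonoid G] {u : σ → G}
    {i j : σ} {l m : ℕ} (hl : l • u i = 0) (hm : m • u j = 0) :
    Ideal.span {X i ^ l - 1, X j ^ m - 1} ≤
      RingHom.ker (groupAlgebraEval u : MvPolynomial σ R →ₐ[R] AddMonoidAlgebra R G) := by
  rw [Ideal.span_le, Set.pair_subset_iff]
  exact ⟨groupAlgebraEval_X_pow_sub_one_eq_zero hl, groupAlgebraEval_X_pow_sub_one_eq_zero hm⟩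

lemma weight_neg [AddCommGroup G] (u : σ → G) (d : σ →₀ ℕ) :
    Finsupp.weight (-u) d = -Finsupp.weight u d := by
  simp [Finsupp.weight_apply, Finsupp.sum]

lemma coeff_zero_groupAlgebraEval_mul_groupAlgebraEval_neg [CommSemiring R] [AddCommGroup G]
    {u : σ → G} {p q : MvPolynomial σ R}
    (hu : Set.InjOn (Finsupp.weight u) (p.support ∪ q.support : Set (σ →₀ ℕ))) :
    (groupAlgebraEval u p * groupAlgebraEval (-u) q).coeff 0 =
      ∑ d ∈ p.support, coeff d p * coeff d q := by
  classical
  simp only [groupAlgebraEval_eq_sum, Finset.sum_mul_sum, weight_neg,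
    AddMonoidAlgebra.single_mul_single, AddMonoidAlgebra.coeff_sum, Finsupp.finsetSum_apply,
    AddMonoidAlgebra.coeff_single, Finsupp.single_apply, ← sub_eq_add_neg, sub_eq_zero]
  refine Finset.sum_congr rfl fun d hd => ?_
  have hweight : ∀ e ∈ q.support, (Finsupp.weight u d = Finsupp.weight u e ↔ d = e) :=
    fun e he => hu.eq_iff (Or.inl hd) (Or.inr he)
  rw [Finset.sum_congr rfl fun e he => if_congr (hweight e he) rfl rfl, Finset.sum_ite_eq,
    ite_eq_left_iff]
  intro hdq
  rw [notMem_support_iff.1 hdq, mul_zero]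

lemma groupAlgebraEval_neg_recip {F : Type*} [Field F] [AddCommGroup G] (u : Fin 2 → G)
    (h : MvPolynomial (Fin 2) F) :
    groupAlgebraEval (-u) (recip h) =
      AddMonoidAlgebra.single (-(h.degreeOf 0 • u 0 + h.degreeOf 1 • u 1)) 1 *
        groupAlgebraEval u h := by
  rw [recip, map_sum, groupAlgebraEval_eq_sum u h, Finset.mul_sum]
  refine Finset.sum_congr rfl fun d hd => ?_
  rw [groupAlgebraEval_monomial, AddMonoidAlgebra.single_mul_single, one_mul]
  congr 1
  rw [weight_neg, map_add, Finsupp.weight_single, Finsupp.weight_single, Finsupp.weight_eq_sum,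
    Fin.sum_univ_two, sub_nsmul _ (monomial_le_degreeOf 0 hd),
    sub_nsmul _ (monomial_le_degreeOf 1 hd)]
  abel

end GroupAlgebra

section CyclicProduct

variable {σ : Type*} [DecidableEq σ]

/-- The standard generators of the product of cyclic groups `∏ i, ℤ/(n i)`. -/
def cyclicGenerator (n : σ → ℕ) (i : σ) : ∀ j, ZMod (n j) :=
  Pi.single i 1

lemma nsmul_cyclicGenerator (n : σ → ℕ) (i : σ) : n i • cyclicGenerator n i = 0 := by
  simp [cyclicGenerator, ← Pi.single_smul]

lemma weight_cyclicGenerator_apply (n : σ → ℕ) (d : σ →₀ ℕ) (i : σ) :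
    Finsupp.weight (cyclicGenerator n) d i = d i := by
  induction d using Finsupp.induction_linear with
  | zero => simp
  | add d e hd he => simp [hd, he]
  | single j k =>
    obtain rfl | hij := eq_or_ne i j
    · simp [cyclicGenerator, Finsupp.weight_single]
    · simp [cyclicGenerator, Finsupp.weight_single, hij]

lemma injOn_weight_cyclicGenerator (n : σ → ℕ) :
    Set.InjOn (Finsupp.weight (cyclicGenerator n)) {d | ∀ i, d i < n i} := by
  intro d hd e he hde
  ext i
  have hcast : (d i : ZMod (n i)) = e i := by
    simpa only [weight_cyclicGenerator_apply] using congrFun hde i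
  exact ((ZMod.natCast_eq_natCast_iff _ _ _).1 hcast).eq_of_lt_of_lt (hd i) (he i)

end CyclicProduct

lemma support_subset_of_forall_degreeOf_lt {σ R : Type*} [CommSemiring R] {n : σ → ℕ}
    {p : MvPolynomial σ R} (hp : ∀ i, p.degreeOf i < n i) :
    (p.support : Set (σ →₀ ℕ)) ⊆ {d | ∀ i, d i < n i} :=
  fun _ hd i => (monomial_le_degreeOf i hd).trans_lt (hp i)

lemma sum_support_eq_sum_range_sum_range {R M : Type*} [CommSemiring R] [AddCommMonoid M]
    {l m : ℕ} {p : MvPolynomial (Fin 2) R} (hpl : p.degreeOf 0 < l) (hpm : p.degreeOf 1 < m)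
    {f : (Fin 2 →₀ ℕ) → M} (hf : ∀ d ∉ p.support, f d = 0) :
    ∑ d ∈ p.support, f d =
      ∑ i ∈ Finset.range l, ∑ j ∈ Finset.range m, f (Finsupp.single 0 i + Finsupp.single 1 j) := by
  have single_add_single (d : Fin 2 →₀ ℕ) :
      Finsupp.single 0 (d 0) + Finsupp.single 1 (d 1) = d := by
    ext k
    fin_cases k <;> simp
  rw [← Finset.sum_product']
  refine Finset.sum_of_injOn (fun d => (d 0, d 1)) ?_ ?_ ?_ ?_
  · intro d _ e _ hde
    rw [← single_add_single d, ← single_add_single e, (Prod.mk.inj hde).1, (Prod.mk.inj hde).2]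
  · intro d hd
    simpa using ⟨(monomial_le_degreeOf 0 hd).trans_lt hpl, (monomial_le_degreeOf 1 hd).trans_lt hpm⟩
  · rintro ⟨i, j⟩ _ hij
    exact hf _ fun hd => hij ⟨_, hd, by simp⟩
  · intro d _
    rw [single_add_single]

lemma map_dvd_map_of_mk_mem_span_mk {A B : Type*} [CommRing A] [Semiring B] {I : Ideal A}
    {f : A →+* B} (hI : I ≤ RingHom.ker f) {a b : A}
    (hb : Ideal.Quotient.mk I b ∈ Ideal.span {Ideal.Quotient.mk I a}) : f a ∣ f b :=
  map_dvd (Ideal.Quotient.lift I f hI) (Ideal.mem_span_singleton.1 hb)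

lemma groupAlgebraEval_mul_groupAlgebraEval_neg_eq_zero {F G : Type*} [Field F] [AddCommGroup G]
    {u : Fin 2 → G} {I : Ideal (MvPolynomial (Fin 2) F)}
    (hI : I ≤ RingHom.ker (groupAlgebraEval u : _ →ₐ[F] AddMonoidAlgebra F G))
    (hI_neg : I ≤ RingHom.ker (groupAlgebraEval (-u) : _ →ₐ[F] AddMonoidAlgebra F G))
    {g h p q : MvPolynomial (Fin 2) F} (hgh : g * h ∈ I)
    (hp : Ideal.Quotient.mk I p ∈ Ideal.span {Ideal.Quotient.mk I g})
    (hq : Ideal.Quotient.mk I q ∈ Ideal.span {Ideal.Quotient.mk I (recip h)}) :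
    groupAlgebraEval u p * groupAlgebraEval (-u) q = 0 := by
  have generators_mul : groupAlgebraEval u g * groupAlgebraEval (-u) (recip h) = 0 := by
    rw [groupAlgebraEval_neg_recip, mul_left_comm, ← map_mul, RingHom.mem_ker.1 (hI hgh), mul_zero]
  rw [← zero_dvd_iff, ← generators_mul]
  exact mul_dvd_mul (map_dvd_map_of_mk_mem_span_mk hI hp) (map_dvd_map_of_mk_mem_span_mk hI_neg hq)

theorem stmt_5_general {F : Type*} [Field F] {l m : ℕ} {g h p q : MvPolynomial (Fin 2) F}
    {I : Ideal (MvPolynomial (Fin 2) F)} (hI : I = Ideal.span {X 0 ^ l - 1, X 1 ^ m - 1})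
    (hgh : g * h ∈ I)
    (hp : Ideal.Quotient.mk I p ∈ Ideal.span {Ideal.Quotient.mk I g})
    (hq : Ideal.Quotient.mk I q ∈ Ideal.span {Ideal.Quotient.mk I (recip h)})
    (hpdeg : p.degreeOf 0 < l ∧ p.degreeOf 1 < m) (hqdeg : q.degreeOf 0 < l ∧ q.degreeOf 1 < m) :
    ∑ i ∈ Finset.range l, ∑ j ∈ Finset.range m,
      coeff (Finsupp.single 0 i + Finsupp.single 1 j) p *
        coeff (Finsupp.single 0 i + Finsupp.single 1 j) q = 0 := by
  let u := cyclicGenerator ![l, m]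
  have hl : l • u 0 = 0 := nsmul_cyclicGenerator ![l, m] 0
  have hm : m • u 1 = 0 := nsmul_cyclicGenerator ![l, m] 1
  have hker := span_X_pow_sub_one_le_ker_groupAlgebraEval (R := F) hl hm
  have hker_neg := span_X_pow_sub_one_le_ker_groupAlgebraEval (R := F) (u := -u)
    (by rw [Pi.neg_apply, smul_neg, hl, neg_zero]) (by rw [Pi.neg_apply, smul_neg, hm, neg_zero])
  have hinj : Set.InjOn (Finsupp.weight u) (p.support ∪ q.support : Set (Fin 2 →₀ ℕ)) :=
    (injOn_weight_cyclicGenerator ![l, m]).mono <| Set.union_subset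
      (support_subset_of_forall_degreeOf_lt <| Fin.forall_fin_two.2 hpdeg)
      (support_subset_of_forall_degreeOf_lt <| Fin.forall_fin_two.2 hqdeg)
  rw [← sum_support_eq_sum_range_sum_range hpdeg.1 hpdeg.2 (f := fun d => coeff d p * coeff d q)
      fun d hd => by rw [notMem_support_iff.1 hd, zero_mul],
    ← coeff_zero_groupAlgebraEval_mul_groupAlgebraEval_neg hinj,
    groupAlgebraEval_mul_groupAlgebraEval_neg_eq_zero (hI ▸ hker) (hI ▸ hker_neg) hgh hp hq,
    AddMonoidAlgebra.coeff_zero, Finsupp.zero_apply]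

/-- Suppose `(x^l − 1)(y^m − 1) = g·h` with `g, h` nonzero.  In the
quotient ring `𝔎 = F[x,y]/⟨x^l−1, y^m−1⟩`, let `C` be the ideal generated by (the
image of) `g` and `C*` the ideal generated by (the image of) `h*`.  Identifying each
class of `𝔎` with the coefficient vector of its unique representative of `x`-degree
`< l` and `y`-degree `< m` (the function `rep` below), we have `C* ⊆ C^⊥` for the
Euclidean inner product: every element of `C*` is orthogonal to every element of `C`. -/
theorem stmt_5 (F : Type*) [Field F] [Fintype F] (l m : ℕ) (hl : 0 < l) (hm : 0 < m)
    (g h : MvPolynomial (Fin 2) F) (hg : g ≠ 0) (hh : h ≠ 0)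
    (heq : (X 0 ^ l - 1) * (X 1 ^ m - 1) = g * h)
    (K : Ideal (MvPolynomial (Fin 2) F))
    (hK : K = Ideal.span {X 0 ^ l - 1, X 1 ^ m - 1})
    (rep : (MvPolynomial (Fin 2) F ⧸ K) → MvPolynomial (Fin 2) F)
    (hrep : ∀ c, Ideal.Quotient.mk K (rep c) = c)
    (hrepdeg : ∀ c, (rep c).degreeOf 0 < l ∧ (rep c).degreeOf 1 < m) :
    ∀ d ∈ Ideal.span {Ideal.Quotient.mk K (recip h)},
      ∀ c ∈ Ideal.span {Ideal.Quotient.mk K g},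
        ∑ i ∈ Finset.range l, ∑ j ∈ Finset.range m,
          MvPolynomial.coeff (Finsupp.single 0 i + Finsupp.single 1 j) (rep c) *
            MvPolynomial.coeff (Finsupp.single 0 i + Finsupp.single 1 j) (rep d) = 0 := by
  have hgh : g * h ∈ K :=
    hK ▸ heq ▸ Ideal.mul_mem_right _ _ (Ideal.subset_span (Set.mem_insert _ _))
  exact fun d hd c hc =>
    stmt_5_general hK hgh ((hrep c).symm ▸ hc) ((hrep d).symm ▸ hd) (hrepdeg c) (hrepdeg d)
end

section
/- Let 𝔽_q be a finite field, l, m positive integers, and suppose (x^l − 1)(y^m − 1) = g(x,y)·h(x,y) in 𝔽_q[x,y], where g has x-degree a and y-degree b with 0 < a < l and 0 < b < m. Let C be the ideal of 𝔎 = 𝔽_q[x,y]/⟨x^l−1, y^m−1⟩ generated by the image of g, and C* the ideal of 𝔎 generated by the image of the reciprocal polynomial h*. Then C* ⊆ C if and only if g(x,y)·g*(x,y) divides (x^l − 1)(y^m − 1) in 𝔽_q[x,y]. -/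
/-!
Write `A = x^l - 1` and `B = y^m - 1`, so that `A * B = g * h`. Reciprocation is multiplicative and
negates both `A` and `B`, hence `A * B = g* h*`, and cancelling `g*` turns `g g* ∣ A * B` into
`g ∣ h*`. The containment of ideals says that `h* ∈ (g, A, B)`, which must be shown to force
`g ∣ h*`.

By unique factorization `g = p * q` with `p ∣ A` and `q ∣ B`, so `p` is free of `y`, `q` is free of
`x`, and the two are relatively prime. Now `h* ∈ (p, B)`, where `B` is monic in `y` of degree `m`,
while `h*` has `y`-degree at most `m - deg_y g < m`. Taking the remainder modulo `B` gives `p ∣ h*`.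
Symmetrically `q ∣ h*`, and therefore `p * q ∣ h*`.
-/

open MvPolynomial

section ToMvPolynomial

variable {σ R : Type*} [CommSemiring R]

open scoped Classical in
/-- Multivariate polynomials as univariate polynomials in the single variable `X i`, with
coefficients in the polynomial ring in the remaining variables. This makes division with
remainder by polynomials monic in `X i` available. -/
noncomputable def isolateVar (R : Type*) [CommSemiring R] (i : σ) :
    MvPolynomial σ R ≃ₐ[R] Polynomial (MvPolynomial {j // j ≠ i} R) :=
  (renameEquiv R (Equiv.optionSubtypeNe i).symm).trans (optionEquivLeft R {j // j ≠ i})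

lemma natDegree_isolateVar (i : σ) (f : MvPolynomial σ R) :
    (isolateVar R i f).natDegree = f.degreeOf i := by
  classical
  rw [degreeOf_eq_natDegree]
  simp [isolateVar]

lemma isolateVar_X_self (i : σ) : isolateVar R i (X i) = Polynomial.X := by
  simp [isolateVar]

lemma isolateVar_toMvPolynomial_self (i : σ) (P : Polynomial R) :
    isolateVar R i (P.toMvPolynomial i) = P.map C := by
  rw [Polynomial.toMvPolynomial, ← Polynomial.aeval_algHom_apply, isolateVar_X_self,
    ← algebraMap_eq, Polynomial.aeval_X_left_eq_map]

lemma vars_toMvPolynomial_subset (i : σ) (P : Polynomial R) :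
    (P.toMvPolynomial i).vars ⊆ {i} := by
  classical
  rw [Polynomial.toMvPolynomial_eq_rename_comp]
  exact (vars_rename _ _).trans (Finset.image_subset_iff.mpr fun _ _ => Finset.mem_singleton_self i)

lemma notMem_vars_iff_degreeOf_eq_zero {i : σ} {f : MvPolynomial σ R} :
    i ∉ f.vars ↔ f.degreeOf i = 0 := by
  rw [mem_vars_iff_degreeOf_ne_zero, not_not]

lemma degreeOf_toMvPolynomial [DecidableEq σ] (i j : σ) (P : Polynomial R) :
    (P.toMvPolynomial j).degreeOf i = if i = j then P.natDegree else 0 := by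
  split_ifs with hij
  · rw [hij, ← natDegree_isolateVar, isolateVar_toMvPolynomial_self,
      Polynomial.natDegree_map_eq_of_injective (C_injective _ R)]
  · exact notMem_vars_iff_degreeOf_eq_zero.mp fun hi =>
      hij (Finset.mem_singleton.mp (vars_toMvPolynomial_subset j P hi))

end ToMvPolynomial

section XPowSubOne

variable {σ R : Type*} [CommRing R]

lemma toMvPolynomial_X_pow_sub_one (i : σ) (n : ℕ) :
    (Polynomial.X ^ n - 1 : Polynomial R).toMvPolynomial i = X i ^ n - 1 := by
  rw [map_sub, map_pow, map_one, Polynomial.toMvPolynomial_X]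

lemma degreeOf_X_pow_sub_one [DecidableEq σ] [Nontrivial R] (i j : σ) (n : ℕ) :
    degreeOf i (X j ^ n - 1 : MvPolynomial σ R) = if i = j then n else 0 := by
  rw [← toMvPolynomial_X_pow_sub_one, degreeOf_toMvPolynomial, ← Polynomial.C_1,
    Polynomial.natDegree_X_pow_sub_C]

lemma X_pow_sub_one_ne_zero [Nontrivial R] (i : σ) {n : ℕ} (hn : n ≠ 0) :
    (X i ^ n - 1 : MvPolynomial σ R) ≠ 0 := by
  classical
  intro hzero
  simpa [hzero, hn.symm] using degreeOf_X_pow_sub_one (R := R) i i n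

end XPowSubOne

section Divisibility

variable {σ R : Type*} [CommRing R]

lemma C_dvd_of_mem_span_pair {c : R} {f B : Polynomial R} (hB : B.Monic)
    (hdeg : f.natDegree < B.natDegree) (hf : f ∈ Ideal.span {Polynomial.C c, B}) :
    Polynomial.C c ∣ f := by
  nontriviality R
  obtain ⟨s, t, rfl⟩ := Ideal.mem_span_pair.mp hf
  have hmod := (Polynomial.modByMonic_eq_self_iff hB).mpr (Polynomial.degree_lt_degree hdeg)
  have htB : (t * B) %ₘ B = 0 := (Polynomial.modByMonic_eq_zero_iff_dvd hB).mpr (dvd_mul_left B t)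
  refine ⟨s %ₘ B, ?_⟩
  calc
    s * Polynomial.C c + t * B = (c • s + t * B) %ₘ B := by
      rw [Polynomial.smul_eq_C_mul, mul_comm _ s, hmod]
    _ = c • (s %ₘ B) := by
      rw [Polynomial.add_modByMonic, htB, add_zero, Polynomial.smul_modByMonic]
    _ = Polynomial.C c * (s %ₘ B) := Polynomial.smul_eq_C_mul c

lemma dvd_of_mem_span_pair_toMvPolynomial {i : σ} {p f : MvPolynomial σ R} {P : Polynomial R}
    (hP : P.Monic) (hp : i ∉ p.vars) (hdeg : f.degreeOf i < P.natDegree)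
    (hf : f ∈ Ideal.span {p, P.toMvPolynomial i}) : p ∣ f := by
  nontriviality R
  have hpC : isolateVar R i p = Polynomial.C ((isolateVar R i p).coeff 0) :=
    Polynomial.eq_C_of_natDegree_eq_zero <| by
      rwa [natDegree_isolateVar, ← notMem_vars_iff_degreeOf_eq_zero]
  rw [← map_dvd_iff (isolateVar R i), hpC]
  refine C_dvd_of_mem_span_pair (hP.map C) ?_ ?_
  · rwa [natDegree_isolateVar, hP.natDegree_map]
  · have hmap := Ideal.mem_map_of_mem (isolateVar R i) hf
    rwa [Ideal.map_span, Set.image_pair, isolateVar_toMvPolynomial_self, hpC] at hmap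

lemma vars_subset_of_dvd {R : Type*} [CommSemiring R] [NoZeroDivisors R] {p q : MvPolynomial σ R}
    (hq : q ≠ 0) (hpq : p ∣ q) : p.vars ⊆ q.vars := by
  obtain ⟨r, rfl⟩ := hpq
  intro i hi
  rw [mem_vars_iff_degreeOf_ne_zero] at hi ⊢
  rw [degreeOf_mul_eq (left_ne_zero_of_mul hq) (right_ne_zero_of_mul hq)]
  omega

lemma isRelPrime_of_disjoint_vars {F : Type*} [Field F] {p q : MvPolynomial σ F}
    (hp : p ≠ 0) (hq : q ≠ 0) (hpq : Disjoint p.vars q.vars) : IsRelPrime p q := by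
  intro d hdp hdq
  have hvars : d.vars = ∅ := Finset.subset_empty.mp <|
    hpq (vars_subset_of_dvd hp hdp) (vars_subset_of_dvd hq hdq)
  have hd : d ≠ 0 := ne_zero_of_dvd_ne_zero hp hdp
  rw [vars_eq_empty_iff_eq_C.mp hvars] at hd ⊢
  exact (isUnit_iff_ne_zero.mpr (C_ne_zero.mp hd)).map C

lemma span_singleton_sup_span_pair_le {R : Type*} [CommSemiring R] {a b g p : R}
    (hg : p ∣ g) (ha : p ∣ a) :
    Ideal.span {g} ⊔ Ideal.span {a, b} ≤ Ideal.span {p, b} := by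
  rw [Ideal.span_insert, Ideal.span_insert p, ← sup_assoc]
  gcongr
  exact sup_le (Ideal.span_singleton_le_span_singleton.mpr hg)
    (Ideal.span_singleton_le_span_singleton.mpr ha)

variable {F : Type*} [Field F] {i j : σ} {P Q : Polynomial F} {f g : MvPolynomial σ F}

lemma dvd_of_mem_span_sup_span_pair (hij : i ≠ j) (hP : P.Monic) (hQ : Q.Monic)
    (hg : g ∣ P.toMvPolynomial i * Q.toMvPolynomial j)
    (hfi : f.degreeOf i < P.natDegree) (hfj : f.degreeOf j < Q.natDegree)
    (hf : f ∈ Ideal.span {g} ⊔ Ideal.span {P.toMvPolynomial i, Q.toMvPolynomial j}) :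
    g ∣ f := by
  obtain ⟨p, q, hpP, hqQ, rfl⟩ := exists_dvd_and_dvd_of_dvd_mul hg
  have hP0 : P.toMvPolynomial i ≠ 0 :=
    (map_ne_zero_iff _ (Polynomial.toMvPolynomial_injective i)).mpr hP.ne_zero
  have hQ0 : Q.toMvPolynomial j ≠ 0 :=
    (map_ne_zero_iff _ (Polynomial.toMvPolynomial_injective j)).mpr hQ.ne_zero
  have hp : p.vars ⊆ {i} := (vars_subset_of_dvd hP0 hpP).trans (vars_toMvPolynomial_subset i P)
  have hq : q.vars ⊆ {j} := (vars_subset_of_dvd hQ0 hqQ).trans (vars_toMvPolynomial_subset j Q)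
  have hrel : IsRelPrime p q :=
    isRelPrime_of_disjoint_vars (ne_zero_of_dvd_ne_zero hP0 hpP) (ne_zero_of_dvd_ne_zero hQ0 hqQ)
      ((Finset.disjoint_singleton.mpr hij).mono hp hq)
  have hfp : f ∈ Ideal.span {p, Q.toMvPolynomial j} :=
    span_singleton_sup_span_pair_le (dvd_mul_right p q) hpP hf
  have hfq : f ∈ Ideal.span {q, P.toMvPolynomial i} :=
    span_singleton_sup_span_pair_le (dvd_mul_left q p) hqQ (Set.pair_comm _ _ ▸ hf)
  exact hrel.mul_dvd
    (dvd_of_mem_span_pair_toMvPolynomial hQ (fun hj => hij.symm (by simpa using hp hj)) hfj hfp)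
    (dvd_of_mem_span_pair_toMvPolynomial hP (fun hi => hij (by simpa using hq hi)) hfi hfq)

lemma span_mk_le_span_mk_iff_dvd (hij : i ≠ j) (hP : P.Monic) (hQ : Q.Monic)
    (hg : g ∣ P.toMvPolynomial i * Q.toMvPolynomial j)
    (hfi : f.degreeOf i < P.natDegree) (hfj : f.degreeOf j < Q.natDegree)
    {K : Ideal (MvPolynomial σ F)}
    (hK : K = Ideal.span {P.toMvPolynomial i, Q.toMvPolynomial j}) :
    Ideal.span {Ideal.Quotient.mk K f} ≤ Ideal.span {Ideal.Quotient.mk K g} ↔ g ∣ f := by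
  refine ⟨fun hle => ?_, fun hdvd => Ideal.span_singleton_le_span_singleton.mpr (map_dvd _ hdvd)⟩
  refine dvd_of_mem_span_sup_span_pair hij hP hQ hg hfi hfj ?_
  rwa [Ideal.span_singleton_le_iff_mem, ← Set.image_singleton (f := Ideal.Quotient.mk K) (a := g),
    ← Ideal.map_span, Ideal.mem_quotient_iff_mem_sup, hK] at hle

end Divisibility

section Reciprocal

variable {F : Type*} [Field F] {f g h : MvPolynomial (Fin 2) F}

lemma degreeOf_recip_le (i : Fin 2) (f : MvPolynomial (Fin 2) F) :
    (recip f).degreeOf i ≤ f.degreeOf i := by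
  refine (degreeOf_sum_le _ _ _).trans (Finset.sup_le fun d hd => ?_)
  rw [degreeOf_monomial_eq _ _ (mem_support_iff.mp hd)]
  fin_cases i <;> simp

lemma aeval_recip {K : Type*} [Field K] [Algebra F K] {v : Fin 2 → K} (hv : ∀ i, v i ≠ 0)
    (f : MvPolynomial (Fin 2) F) :
    aeval v (recip f) = (∏ i, v i ^ f.degreeOf i) * aeval v⁻¹ f := by
  rw [recip, map_sum, aeval_eq_eval₂Hom, coe_eval₂Hom, eval₂_eq', Finset.mul_sum]
  refine Finset.sum_congr rfl fun d hd => ?_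
  have hpow (i : Fin 2) : v i ^ (f.degreeOf i - d i) = v i ^ f.degreeOf i * (v i ^ d i)⁻¹ :=
    pow_sub₀ _ (hv i) (monomial_le_degreeOf i hd)
  simp only [aeval_monomial, Finsupp.prod_fintype, pow_zero, implies_true, Fin.prod_univ_two,
    Finsupp.add_apply, Finsupp.single_eq_same, Pi.inv_apply, inv_pow,
    Finsupp.single_eq_of_ne, ne_eq, zero_ne_one, one_ne_zero, not_false_eq_true, add_zero, zero_add,
    hpow]
  ring

lemma recip_eq_of_forall_aeval {r : MvPolynomial (Fin 2) F}
    (hr : ∀ v : Fin 2 → FractionRing (MvPolynomial (Fin 2) F), (∀ i, v i ≠ 0) →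
      aeval v r = (∏ i, v i ^ f.degreeOf i) * aeval v⁻¹ f) :
    recip f = r := by
  let K := FractionRing (MvPolynomial (Fin 2) F)
  let v : Fin 2 → K := fun i => algebraMap (MvPolynomial (Fin 2) F) K (X i)
  have hv (i : Fin 2) : v i ≠ 0 := by simp [v]
  have haeval (p : MvPolynomial (Fin 2) F) : aeval v p = algebraMap _ K p := by
    rw [show v = algebraMap _ K ∘ X from rfl, aeval_algebraMap_apply, aeval_X_left_apply]
  apply IsFractionRing.injective (MvPolynomial (Fin 2) F) K
  rw [← haeval, ← haeval, aeval_recip hv, hr v hv]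

lemma recip_zero : recip (0 : MvPolynomial (Fin 2) F) = 0 := by
  simp [recip]

lemma recip_mul (f g : MvPolynomial (Fin 2) F) : recip (f * g) = recip f * recip g := by
  rcases eq_or_ne f 0 with rfl | hf
  · simp only [zero_mul, recip_zero]
  rcases eq_or_ne g 0 with rfl | hg
  · simp only [mul_zero, recip_zero]
  refine recip_eq_of_forall_aeval fun v hv => ?_
  simp only [map_mul, aeval_recip hv, degreeOf_mul_eq hf hg, pow_add, Finset.prod_mul_distrib]
  ring

lemma recip_X_pow_sub_one (j : Fin 2) (n : ℕ) :
    recip (X j ^ n - 1 : MvPolynomial (Fin 2) F) = -(X j ^ n - 1) := by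
  refine recip_eq_of_forall_aeval fun v hv => ?_
  simp [degreeOf_X_pow_sub_one, mul_sub, hv]

lemma mul_recip_dvd_mul_iff (hgh : g * h ≠ 0) (hself : recip (g * h) = g * h) :
    g * recip g ∣ g * h ↔ g ∣ recip h := by
  have hrecip : g * h = recip g * recip h := by rw [← recip_mul, hself]
  have hg : recip g ≠ 0 := left_ne_zero_of_mul (hrecip ▸ hgh)
  rw [hrecip, mul_comm g, mul_dvd_mul_iff_left hg]

lemma degreeOf_recip_right_lt {i : Fin 2} (hgh : g * h ≠ 0) (hg : 0 < g.degreeOf i) :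
    (recip h).degreeOf i < (g * h).degreeOf i := by
  rw [degreeOf_mul_eq (left_ne_zero_of_mul hgh) (right_ne_zero_of_mul hgh)]
  exact (degreeOf_recip_le i h).trans_lt (Nat.lt_add_of_pos_left hg)

end Reciprocal

theorem stmt_6_general (F : Type*) [Field F] (l m : ℕ) (hl : 0 < l) (hm : 0 < m)
    (g h : MvPolynomial (Fin 2) F)
    (heq : (X 0 ^ l - 1) * (X 1 ^ m - 1) = g * h)
    (ha0 : 0 < g.degreeOf 0) (hb0 : 0 < g.degreeOf 1)
    (K : Ideal (MvPolynomial (Fin 2) F))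
    (hK : K = Ideal.span {X 0 ^ l - 1, X 1 ^ m - 1}) :
    Ideal.span {Ideal.Quotient.mk K (recip h)} ≤ Ideal.span {Ideal.Quotient.mk K g} ↔
      g * recip g ∣ (X (0 : Fin 2) ^ l - 1) * (X 1 ^ m - 1) := by
  have hA := X_pow_sub_one_ne_zero (R := F) (0 : Fin 2) hl.ne'
  have hB := X_pow_sub_one_ne_zero (R := F) (1 : Fin 2) hm.ne'
  have hgh : g * h ≠ 0 := heq ▸ mul_ne_zero hA hB
  have hself : recip (g * h) = g * h := by
    rw [← heq, recip_mul, recip_X_pow_sub_one, recip_X_pow_sub_one, neg_mul_neg]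
  have hx : (recip h).degreeOf 0 < l := by
    simpa [← heq, degreeOf_mul_eq hA hB, degreeOf_X_pow_sub_one]
      using degreeOf_recip_right_lt hgh ha0
  have hy : (recip h).degreeOf 1 < m := by
    simpa [← heq, degreeOf_mul_eq hA hB, degreeOf_X_pow_sub_one]
      using degreeOf_recip_right_lt hgh hb0
  rw [heq, mul_recip_dvd_mul_iff hgh hself]
  refine span_mk_le_span_mk_iff_dvd zero_ne_one (Polynomial.monic_X_pow_sub_C 1 hl.ne')
    (Polynomial.monic_X_pow_sub_C 1 hm.ne') ?_ ?_ ?_ ?_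
  · simpa only [map_one, toMvPolynomial_X_pow_sub_one] using Dvd.intro h heq.symm
  · rwa [Polynomial.natDegree_X_pow_sub_C]
  · rwa [Polynomial.natDegree_X_pow_sub_C]
  · simpa only [map_one, toMvPolynomial_X_pow_sub_one] using hK

/-- Suppose `(x^l − 1)(y^m − 1) = g·h` in `F[x,y]`, where `g` has
`x`-degree `a` and `y`-degree `b` with `0 < a < l` and `0 < b < m`.  Let `C` be the
ideal of `𝔎 = F[x,y]/⟨x^l−1, y^m−1⟩` generated by the image of `g` and `C*` the ideal
generated by the image of `h*`.  Then `C* ⊆ C` iff `g·g*` divides `(x^l − 1)(y^m − 1)`. -/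
theorem stmt_6 (F : Type*) [Field F] [Fintype F] (l m : ℕ) (hl : 0 < l) (hm : 0 < m)
    (g h : MvPolynomial (Fin 2) F)
    (heq : (X 0 ^ l - 1) * (X 1 ^ m - 1) = g * h)
    (ha0 : 0 < g.degreeOf 0) (hal : g.degreeOf 0 < l)
    (hb0 : 0 < g.degreeOf 1) (hbm : g.degreeOf 1 < m)
    (K : Ideal (MvPolynomial (Fin 2) F))
    (hK : K = Ideal.span {X 0 ^ l - 1, X 1 ^ m - 1}) :
    Ideal.span {Ideal.Quotient.mk K (recip h)} ≤ Ideal.span {Ideal.Quotient.mk K g} ↔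
      g * recip g ∣ (X (0 : Fin 2) ^ l - 1) * (X 1 ^ m - 1) := by
  exact stmt_6_general F l m hl hm g h heq ha0 hb0 K hK
end
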